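/- Let n ≥ 1 and let μ be the uniform distribution on the slice S^n_{⌈n/2⌉} of inputs with exactly ⌈n/2⌉ ones. Then D⁺(Maj_n) = D⁺_μ(Maj_n); equivalently, D⁺_μ(Maj_n) ≤ D⁺_ν(Maj_n) for every distribution ν on Maj_n⁻¹(1). -/

import Mathlib

/-!
Symmetrise over coordinate permutations. Let `φ` be a monotone one-sided formula and `m = ⌈n/2⌉`.
A permuted copy of `φ` has the same size, and is again monotone and one-sided because majority is
symmetric. It therefore suffices to find, for every distribution `ν` on `Maj_n⁻¹(1)`, a permutation
`σ` such that the copy of `φ` permuted by `σ` accepts with `ν`-probability at least `Pr_μ[φ = 1]`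
(`exists_permute_pr_ge`).

Such a `σ` exists by averaging. If `y` has exactly `m` ones, then `y ∘ σ` for random `σ` is uniform
on the slice, so it is accepted with probability exactly `Pr_μ[φ = 1]` (`count_slice`). Every `x`
with `Maj_n(x) = 1` lies above some such `y`, and `φ` is monotone, so `x ∘ σ` is accepted with at
least that probability (`count_maj`). Averaging over `x ∼ ν` gives the bound in expectation over `σ`.
-/


/-- A literal over `n` variables: a coordinate `x_i` (if `neg = false`)
or its negation `¬ x_i` (if `neg = true`). -/
structure Lit (n : ℕ) where
  idx : Fin n
  neg : Bool
deriving DecidableEq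

/-- Evaluation of a literal at an assignment. -/
def Lit.eval {n : ℕ} (l : Lit n) (x : Fin n → Bool) : Bool :=
  if l.neg then !(x l.idx) else x l.idx

/-- A clause: a finite set of literals, evaluated as their disjunction. -/
abbrev Clause (n : ℕ) := Finset (Lit n)

/-- A CNF formula: a finite set of clauses, evaluated as their conjunction.
Its size is its number of clauses (`Finset.card`). -/
abbrev CNF (n : ℕ) := Finset (Clause n)

/-- `φ.sat x` means the CNF formula `φ` evaluates to `1` at `x`. -/
def CNF.sat {n : ℕ} (φ : CNF n) (x : Fin n → Bool) : Prop :=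
  ∀ c ∈ φ, ∃ l ∈ c, l.eval x = true

instance {n : ℕ} (φ : CNF n) (x : Fin n → Bool) : Decidable (φ.sat x) :=
  inferInstanceAs (Decidable (∀ c ∈ φ, ∃ l ∈ c, Lit.eval l x = true))

/-- `φ⁻¹(1) ⊆ f⁻¹(1)`: the formula does not err on inputs where `f` is `0`. -/
def CNF.onesided {n : ℕ} (φ : CNF n) (f : (Fin n → Bool) → Bool) : Prop :=
  ∀ x, φ.sat x → f x = true

/-- A CNF formula is monotone if none of its literals is negated. -/
def CNF.mono {n : ℕ} (φ : CNF n) : Prop :=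
  ∀ c ∈ φ, ∀ l ∈ c, l.neg = false

/-- A distribution on `f⁻¹(1)`: nonnegative, supported on `f⁻¹(1)`, summing to 1. -/
def IsDistOn {n : ℕ} (μ : (Fin n → Bool) → ℝ) (f : (Fin n → Bool) → Bool) : Prop :=
  (∀ x, 0 ≤ μ x) ∧ (∀ x, f x = false → μ x = 0) ∧ (∑ x, μ x) = 1

/-- `Pr_{x ∼ μ}[φ(x) = 1]`. -/
noncomputable def CNF.pr {n : ℕ} (φ : CNF n) (μ : (Fin n → Bool) → ℝ) : ℝ :=
  ∑ x, if φ.sat x then μ x else 0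

/-- `D_μ(f)`: the maximum, over CNF formulas `φ` with `φ⁻¹(1) ⊆ f⁻¹(1)` and `|φ| ≥ 1`,
of `Pr_{x∼μ}[φ(x)=1] / |φ|` (0 if there is no such formula). -/
noncomputable def Dmu {n : ℕ} (f : (Fin n → Bool) → Bool) (μ : (Fin n → Bool) → ℝ) : ℝ :=
  sSup {r : ℝ | ∃ φ : CNF n, φ.onesided f ∧ 1 ≤ φ.card ∧ r = φ.pr μ / φ.card}

/-- `D(f)`: the minimum of `D_μ(f)` over distributions `μ` on `f⁻¹(1)`. -/
noncomputable def Dof {n : ℕ} (f : (Fin n → Bool) → Bool) : ℝ :=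
  sInf {r : ℝ | ∃ μ, IsDistOn μ f ∧ r = Dmu f μ}

/-- The monotone variant `D⁺_μ(f)`, restricted to monotone CNF formulas. -/
noncomputable def DmuPlus {n : ℕ} (f : (Fin n → Bool) → Bool) (μ : (Fin n → Bool) → ℝ) : ℝ :=
  sSup {r : ℝ | ∃ φ : CNF n, φ.mono ∧ φ.onesided f ∧ 1 ≤ φ.card ∧ r = φ.pr μ / φ.card}

/-- `D⁺(f)`: the minimum of `D⁺_μ(f)` over distributions `μ` on `f⁻¹(1)`. -/
noncomputable def DPlus {n : ℕ} (f : (Fin n → Bool) → Bool) : ℝ :=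
  sInf {r : ℝ | ∃ μ, IsDistOn μ f ∧ r = DmuPlus f μ}

/-- A list of CNF formulas computes `f` as their pointwise disjunction. -/
def ComputedByOr {n : ℕ} (L : List (CNF n)) (f : (Fin n → Bool) → Bool) : Prop :=
  ∀ x, f x = true ↔ ∃ φ ∈ L, φ.sat x

/-- `L₃(f)`: the minimum size (total number of clauses) of a depth-3 formula computing `f`. -/
noncomputable def L3 {n : ℕ} (f : (Fin n → Bool) → Bool) : ℕ :=
  sInf {s : ℕ | ∃ L : List (CNF n), ComputedByOr L f ∧ s = (L.map Finset.card).sum}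

/-- `L₃⁺(f)`: the minimum size of a depth-3 monotone formula computing `f`. -/
noncomputable def L3Plus {n : ℕ} (f : (Fin n → Bool) → Bool) : ℕ :=
  sInf {s : ℕ | ∃ L : List (CNF n), (∀ φ ∈ L, φ.mono) ∧ ComputedByOr L f ∧
    s = (L.map Finset.card).sum}

/-- The number of ones in a Boolean input. -/
def ones {n : ℕ} (x : Fin n → Bool) : ℕ := (Finset.univ.filter fun i => x i = true).card

/-- The parity function: `1` iff the number of ones is odd. -/
def parityF (n : ℕ) : (Fin n → Bool) → Bool := fun x => decide (ones x % 2 = 1)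

/-- The majority function: `1` iff the number of ones is at least `n/2`. -/
def majF (n : ℕ) : (Fin n → Bool) → Bool := fun x => decide (n ≤ 2 * ones x)

/-- `Pr_{x uniform in f⁻¹(1)}[φ(x) = 1]`. -/
noncomputable def prUnif {n : ℕ} (f : (Fin n → Bool) → Bool) (φ : CNF n) : ℝ :=
  ((Finset.univ.filter fun x => f x = true ∧ φ.sat x).card : ℝ) /
    ((Finset.univ.filter fun x => f x = true).card : ℝ)

/-- `x` is an isolated solution of `φ`: `φ(x)=1` and `φ(y)=0` for every `y`
differing from `x` in exactly one coordinate. -/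
def IsIsolated {n : ℕ} (φ : CNF n) (x : Fin n → Bool) : Prop :=
  φ.sat x ∧ ∀ y : Fin n → Bool, hammingDist x y = 1 → ¬ φ.sat y

/-! ### Renaming variables in a formula -/

/-- The formula obtained from `φ` by renaming each variable `x_i` to `x_{σ i}`. -/
def CNF.permute {n : ℕ} (σ : Equiv.Perm (Fin n)) (φ : CNF n) : CNF n :=
  φ.image fun c => c.image fun l => ⟨σ l.idx, l.neg⟩

lemma permute_sat {n : ℕ} (σ : Equiv.Perm (Fin n)) (φ : CNF n) (x : Fin n → Bool) :
    (φ.permute σ).sat x ↔ φ.sat (x ∘ σ) := by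
  simp [CNF.permute, CNF.sat, Lit.eval]

lemma permute_card {n : ℕ} (σ : Equiv.Perm (Fin n)) (φ : CNF n) :
    (φ.permute σ).card = φ.card := by
  apply Finset.card_image_of_injective
  apply Finset.image_injective
  rintro ⟨i, b⟩ ⟨j, c⟩ h
  simpa using h

lemma permute_mono {n : ℕ} (σ : Equiv.Perm (Fin n)) {φ : CNF n} (h : φ.mono) :
    (φ.permute σ).mono := by
  intro c hc l hl
  simp only [CNF.permute, Finset.mem_image] at hc
  obtain ⟨d, hd, rfl⟩ := hc
  obtain ⟨l', hl', rfl⟩ := Finset.mem_image.1 hl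
  exact h d hd l' hl'

lemma ones_comp {n : ℕ} (σ : Equiv.Perm (Fin n)) (x : Fin n → Bool) :
    ones (x ∘ σ) = ones x := by
  unfold ones
  exact Finset.card_equiv σ (by simp)

lemma permute_onesided {n : ℕ} (σ : Equiv.Perm (Fin n)) {φ : CNF n}
    (h : φ.onesided (majF n)) : (φ.permute σ).onesided (majF n) := by
  intro x hx
  have := h _ ((permute_sat σ φ x).1 hx)
  simpa [majF, ones_comp] using this

lemma sat_of_le {n : ℕ} {φ : CNF n} (h : φ.mono) {x y : Fin n → Bool}
    (hxy : ∀ i, y i = true → x i = true) (hy : φ.sat y) : φ.sat x := by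
  intro c hc
  obtain ⟨l, hl, hv⟩ := hy c hc
  refine ⟨l, hl, ?_⟩
  have hn := h c hc l hl
  simp only [Lit.eval, hn] at hv ⊢
  exact hxy _ hv

/-! ### Random permutations of an input -/

/-- The symmetric group acts transitively on each slice. -/
lemma exists_perm_of_ones_eq {n : ℕ} {x y : Fin n → Bool} (h : ones x = ones y) :
    ∃ σ : Equiv.Perm (Fin n), y = x ∘ σ := by
  have hc : Fintype.card {i // y i = true} = Fintype.card {i // x i = true} := by
    rw [Fintype.card_subtype, Fintype.card_subtype]
    exact h.symm
  let e := Fintype.equivOfCardEq hc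
  refine ⟨e.extendSubtype, funext fun i => ?_⟩
  by_cases hi : y i = true
  · have := e.extendSubtype_mem i hi
    simp [hi, this]
  · have := e.extendSubtype_not_mem i hi
    simp only [Bool.not_eq_true] at hi this
    simp [hi, this]

lemma exists_below {n m : ℕ} {x : Fin n → Bool} (h : m ≤ ones x) :
    ∃ y : Fin n → Bool, ones y = m ∧ ∀ i, y i = true → x i = true := by
  obtain ⟨t, ht, hc⟩ := Finset.exists_subset_card_eq h
  refine ⟨fun i => decide (i ∈ t), by simpa [ones] using hc, fun i hi => ?_⟩
  simpa using ht (by simpa using hi)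

/-- The slice of inputs with exactly `m` ones. -/
abbrev slice (n m : ℕ) : Finset (Fin n → Bool) := Finset.univ.filter fun y => ones y = m

/-- The number of permutations `σ` for which `φ` accepts `x ∘ σ`. -/
def CNF.count {n : ℕ} (φ : CNF n) (x : Fin n → Bool) : ℕ :=
  (Finset.univ.filter fun σ : Equiv.Perm (Fin n) => φ.sat (x ∘ σ)).card

lemma count_eq_of_ones_eq {n : ℕ} (φ : CNF n) {x y : Fin n → Bool} (h : ones x = ones y) :
    φ.count y = φ.count x := by
  obtain ⟨τ, rfl⟩ := exists_perm_of_ones_eq h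
  exact Finset.card_equiv (Equiv.mulLeft τ) (by intro σ; simp [Function.comp_assoc])

/-- If `y` lies in the slice, then `y ∘ σ` is uniform on the slice for uniform `σ`. The identity
counts the pairs `(z, σ)` with `z` in the slice and `φ.sat (z ∘ σ)` in two ways. -/
lemma count_slice {n m : ℕ} (φ : CNF n) {y : Fin n → Bool} (hy : ones y = m) :
    (slice n m).card * φ.count y =
      Fintype.card (Equiv.Perm (Fin n)) * ((slice n m).filter fun z => φ.sat z).card := by
  have h := Finset.sum_card_bipartiteAbove_eq_sum_card_bipartiteBelow
    (s := slice n m) (t := (Finset.univ : Finset (Equiv.Perm (Fin n))))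
    (fun (z : Fin n → Bool) (σ : Equiv.Perm (Fin n)) => φ.sat (z ∘ σ))
  rw [Finset.sum_const_nat (m := φ.count y), Finset.sum_const_nat
    (m := ((slice n m).filter fun z => φ.sat z).card)] at h
  · simpa using h
  · intro σ _
    exact Finset.card_equiv (σ.symm.arrowCongr (Equiv.refl _)) (by
      intro z
      have : (σ.symm.arrowCongr (Equiv.refl Bool)) z = z ∘ σ := by ext; simp
      rw [this]
      simp [Finset.bipartiteBelow, ones_comp])
  · intro z hz
    simp only [Finset.mem_filter, Finset.mem_univ, true_and] at hz
    exact count_eq_of_ones_eq φ (hy.trans hz.symm)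

/-- The uniform distribution on the slice of inputs with `m` ones. -/
noncomputable def unif (n m : ℕ) : (Fin n → Bool) → ℝ := fun x =>
  if ones x = m then (1 : ℝ) / ((slice n m).card : ℝ) else 0

lemma slice_card_pos {n m : ℕ} (h : m ≤ n) : 0 < (slice n m).card := by
  obtain ⟨y, hy, -⟩ := exists_below (n := n) (m := m) (x := fun _ => true) (by simpa [ones] using h)
  exact Finset.card_pos.2 ⟨y, by simp [hy]⟩

lemma pr_unif {n m : ℕ} (φ : CNF n) :
    φ.pr (unif n m) = ((slice n m).filter fun z => φ.sat z).card / (slice n m).card := by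
  have : ∀ x, (if φ.sat x then unif n m x else 0) =
      if ones x = m ∧ φ.sat x then (1 : ℝ) / ((slice n m).card : ℝ) else 0 := by
    intro x
    by_cases h1 : φ.sat x <;> by_cases h2 : ones x = m <;> simp [unif, h1, h2]
  simp only [CNF.pr, this]
  rw [← Finset.sum_filter, Finset.sum_const, Finset.filter_filter]
  simp [div_eq_mul_inv]

/-- An input above the slice is accepted under a random permutation at least as often as an input
of the slice lying below it, hence with probability at least the acceptance probability of `φ` on
the uniform distribution of the slice. -/
lemma count_maj {n m : ℕ} {φ : CNF n} (hφ : φ.mono) {x : Fin n → Bool} (hx : m ≤ ones x) :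
    Fintype.card (Equiv.Perm (Fin n)) * φ.pr (unif n m) ≤ φ.count x := by
  obtain ⟨y, hy, hyx⟩ := exists_below hx
  have hpos : (0 : ℝ) < (slice n m).card := by
    have : y ∈ slice n m := by simp [hy]
    exact_mod_cast Finset.card_pos.2 ⟨y, this⟩
  have h1 : (φ.count y : ℝ) ≤ φ.count x := by
    refine mod_cast Finset.card_le_card fun σ hσ => ?_
    simp only [Finset.mem_filter, Finset.mem_univ, true_and] at hσ ⊢
    exact sat_of_le hφ (fun i => hyx (σ i)) hσ
  have h2 : ((slice n m).card : ℝ) * φ.count y = Fintype.card (Equiv.Perm (Fin n)) *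
      ((slice n m).filter fun z => φ.sat z).card := mod_cast count_slice φ hy
  rw [pr_unif, ← mul_div_assoc, ← h2, mul_div_cancel_left₀ _ hpos.ne']
  exact h1

/-! ### Averaging against a distribution -/

lemma sum_pr_permute {n : ℕ} (φ : CNF n) (ν : (Fin n → Bool) → ℝ) :
    ∑ σ : Equiv.Perm (Fin n), (φ.permute σ).pr ν = ∑ x, ν x * φ.count x := by
  simp only [CNF.pr, permute_sat]
  rw [Finset.sum_comm]
  refine Finset.sum_congr rfl fun x _ => ?_
  rw [← Finset.sum_filter, Finset.sum_const, CNF.count, nsmul_eq_mul, mul_comm]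

lemma exists_permute_pr_ge {n : ℕ} {φ : CNF n} (hφ : φ.mono) {ν : (Fin n → Bool) → ℝ}
    (hν : IsDistOn ν (majF n)) :
    ∃ σ : Equiv.Perm (Fin n), φ.pr (unif n ((n + 1) / 2)) ≤ (φ.permute σ).pr ν := by
  obtain ⟨h0, hsupp, h1⟩ := hν
  have key : ∑ _σ : Equiv.Perm (Fin n), φ.pr (unif n ((n + 1) / 2)) ≤
      ∑ σ : Equiv.Perm (Fin n), (φ.permute σ).pr ν := by
    rw [sum_pr_permute, Finset.sum_const, Finset.card_univ, nsmul_eq_mul]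
    calc _ = ∑ x, ν x * (Fintype.card (Equiv.Perm (Fin n)) * φ.pr (unif n ((n + 1) / 2))) := by
          rw [← Finset.sum_mul, h1, one_mul]
      _ ≤ _ := by
          refine Finset.sum_le_sum fun x _ => ?_
          by_cases hx : majF n x = true
          · refine mul_le_mul_of_nonneg_left (count_maj hφ ?_) (h0 x)
            simp only [majF, decide_eq_true_eq] at hx
            omega
          · simp [hsupp x (by simpa using hx)]
  obtain ⟨σ, -, hσ⟩ := Finset.exists_le_of_sum_le Finset.univ_nonempty key
  exact ⟨σ, hσ⟩

/-! ### Comparison of the maxima -/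

lemma pr_nonneg {n : ℕ} (φ : CNF n) {f : (Fin n → Bool) → Bool} {ν : (Fin n → Bool) → ℝ}
    (hν : IsDistOn ν f) : 0 ≤ φ.pr ν :=
  Finset.sum_nonneg fun x _ => by split_ifs <;> simp [hν.1 x]

lemma pr_le_one {n : ℕ} (φ : CNF n) {f : (Fin n → Bool) → Bool} {ν : (Fin n → Bool) → ℝ}
    (hν : IsDistOn ν f) : φ.pr ν ≤ 1 := by
  rw [← hν.2.2]
  exact Finset.sum_le_sum fun x _ => by split_ifs <;> simp [hν.1 x]

lemma le_DmuPlus {n : ℕ} {φ : CNF n} {f : (Fin n → Bool) → Bool} {ν : (Fin n → Bool) → ℝ}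
    (hν : IsDistOn ν f) (hm : φ.mono) (ho : φ.onesided f) (hc : 1 ≤ φ.card) :
    φ.pr ν / φ.card ≤ DmuPlus f ν := by
  refine le_csSup ⟨1, ?_⟩ ⟨φ, hm, ho, hc, rfl⟩
  rintro _ ⟨ψ, -, -, hψ, rfl⟩
  have : (1 : ℝ) ≤ ψ.card := mod_cast hψ
  rw [div_le_one (by linarith)]
  exact (pr_le_one ψ hν).trans this

lemma DmuPlus_nonneg {n : ℕ} {f : (Fin n → Bool) → Bool} {ν : (Fin n → Bool) → ℝ}
    (hν : IsDistOn ν f) : 0 ≤ DmuPlus f ν := by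
  refine Real.sSup_nonneg ?_
  rintro _ ⟨ψ, -, -, -, rfl⟩
  exact div_nonneg (pr_nonneg ψ hν) (Nat.cast_nonneg _)

lemma unif_isDistOn (n : ℕ) : IsDistOn (unif n ((n + 1) / 2)) (majF n) := by
  refine ⟨fun x => ?_, fun x hx => ?_, ?_⟩
  · unfold unif
    split_ifs <;> positivity
  · have : ones x ≠ (n + 1) / 2 := by
      simp only [majF, decide_eq_false_iff_not] at hx
      omega
    simp [unif, this]
  · have hpos : ((slice n ((n + 1) / 2)).card : ℝ) ≠ 0 := by
      have := slice_card_pos (n := n) (m := (n + 1) / 2) (by omega)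
      exact_mod_cast this.ne'
    unfold unif
    rw [← Finset.sum_filter, Finset.sum_const, nsmul_eq_mul]
    exact mul_one_div_cancel hpos

lemma DmuPlus_unif_le {n : ℕ} {ν : (Fin n → Bool) → ℝ} (hν : IsDistOn ν (majF n)) :
    DmuPlus (majF n) (unif n ((n + 1) / 2)) ≤ DmuPlus (majF n) ν := by
  refine Real.sSup_le ?_ (DmuPlus_nonneg hν)
  rintro _ ⟨φ, hm, ho, hc, rfl⟩
  obtain ⟨σ, hσ⟩ := exists_permute_pr_ge hm hν
  have := le_DmuPlus hν (permute_mono σ hm) (permute_onesided σ ho) (by rwa [permute_card])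
  rw [permute_card] at this
  exact (div_le_div_of_nonneg_right hσ (Nat.cast_nonneg _)).trans this

/-- the uniform distribution on the middle slice `S^n_{⌈n/2⌉}` is a hardest
distribution for monotone CNF approximation of `Maj_n`. -/
theorem stmt4 (n : ℕ) (hn : 1 ≤ n) (μ : (Fin n → Bool) → ℝ)
    (hμ : μ = fun x => if ones x = (n + 1) / 2 then
      (1 : ℝ) / ((Finset.univ.filter fun y : Fin n → Bool => ones y = (n + 1) / 2).card : ℝ)
      else 0) :
    DPlus (majF n) = DmuPlus (majF n) μ ∧
      ∀ ν : (Fin n → Bool) → ℝ, IsDistOn ν (majF n) →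
        DmuPlus (majF n) μ ≤ DmuPlus (majF n) ν := by
  have hμ' : μ = unif n ((n + 1) / 2) := hμ
  subst hμ'
  refine ⟨?_, fun ν hν => DmuPlus_unif_le hν⟩
  refine IsLeast.csInf_eq ⟨⟨_, unif_isDistOn n, rfl⟩, ?_⟩
  rintro _ ⟨ν, hν, rfl⟩
  exact DmuPlus_unif_le hν
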